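/- Let ℓ, p, q be distinct primes such that q ≡ 8 (mod 9) and {ℓ mod 9, p mod 9} = {2, 5}. Let K = ℚ(β) be the cubic field obtained by adjoining to ℚ a root β of X³ − ℓ²/p. Then there exists ε ∈ K with Norm_{K/ℚ}(ε) = p·q. -/

import Mathlib

/-!
The element `θ = pβ²/ℓ` satisfies `θ³ = ℓp`, so `m³ - ℓp` is the norm of `m - θ`. If a prime `r`
divides `m³ - ℓp`, adjusting `m` modulo `r²` produces an ideal of `K` of norm `r` or `r²`. Passing
to `L = K(ω)`, where `ω` is a primitive cube root of unity, and raising to the class number of `L`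
produces an element of `K` of norm `± r ^ e`; when `3` does not divide the class number, it does not
divide `e`, and `r` itself is a norm. This applies to `r = p` with `m = 0`, and to `r = q`, modulo
which every integer is a cube.

That `3` does not divide the class number of `L` is genus theory for the cyclic cubic extension
`L/k`, `k = ℚ(ω)`. Since `ℓp ≡ 1 (mod 9)`, only the primes `λ ∣ ℓ` and `π ∣ p` ramify, and since
neither `ℓ` nor `p` is `±1 (mod 9)`, the unit `ω` is not a local norm at `λ`. Hence an ideal class
fixed by `Gal(L/k)` contains a fixed ideal, and so lies in the group generated by `λ` and `π`, in
which `λπ = (θ)`. A Galois-equivariance argument on the units of `L`, whose rank is `2`, produces a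
further principal `λ ^ i π ^ j`, so both `λ` and `π` are principal. No nontrivial class is fixed by
the group of order `3`, so there is no `3`-torsion.
-/

open NumberField Pointwise Polynomial Module

section SpanPair

variable {R : Type*} [CommRing R] {x a b : R} {n : ℕ}

theorem mem_span_pair_pow_of_pow_eq_mul (hn : n ≠ 0) (hab : IsCoprime a b) (hx : x ^ n = a * b) :
    a ∈ Ideal.span {x, a} ^ n := by
  obtain ⟨u, v, huv⟩ := hab.pow_left (m := n - 1)
  have ha : a = u * a ^ n + v * x ^ n := by
    rw [hx, ← pow_sub_one_mul hn]
    linear_combination -a * huv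
  have mem_pow {y : R} (hy : y ∈ ({x, a} : Set R)) (c : R) : c * y ^ n ∈ Ideal.span {x, a} ^ n :=
    Ideal.mul_mem_left _ c (Ideal.pow_mem_pow (Ideal.subset_span hy) n)
  have hmem := add_mem (mem_pow (y := a) (by simp) u) (mem_pow (y := x) (by simp) v)
  rwa [← ha] at hmem

theorem span_pair_mul_span_pair_eq_span_singleton (hn : 2 ≤ n) (hab : IsCoprime a b)
    (hx : x ^ n = a * b) : Ideal.span {x, a} * Ideal.span {x, b} = Ideal.span {x} := by
  have hdvd : x ∣ a * b := hx ▸ dvd_pow_self x (by omega)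
  apply le_antisymm
  · simp [Ideal.span_pair_mul_span_pair, Ideal.span_le, Set.insert_subset_iff,
      Ideal.mem_span_singleton, hdvd]
  · obtain ⟨u, v, huv⟩ := hab
    have hmem : u * (a * x) + v * (x * b) ∈ Ideal.span {x, a} * Ideal.span {x, b} :=
      add_mem (Ideal.mul_mem_left _ u (Ideal.mul_mem_mul (Ideal.subset_span (by simp))
        (Ideal.subset_span (by simp)))) (Ideal.mul_mem_left _ v (Ideal.mul_mem_mul
        (Ideal.subset_span (by simp)) (Ideal.subset_span (by simp))))
    rw [Ideal.span_singleton_le_iff_mem]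
    convert hmem using 1
    linear_combination -x * huv

theorem span_pair_pow_eq_span_singleton [IsDomain R] (hn : 2 ≤ n) (hb : b ≠ 0)
    (hab : IsCoprime a b) (hx : x ^ n = a * b) : Ideal.span {x, a} ^ n = Ideal.span {a} := by
  refine le_antisymm ?_ ((Ideal.span_singleton_le_iff_mem _).mpr
    (mem_span_pair_pow_of_pow_eq_mul (by omega) hab hx))
  have hb_mem : b ∈ Ideal.span {x, b} ^ n :=
    mem_span_pair_pow_of_pow_eq_mul (by omega) hab.symm (by rw [hx, mul_comm])
  refine (Ideal.span_singleton_mul_right_mono hb).mp ?_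
  calc Ideal.span {b} * Ideal.span {x, a} ^ n
      ≤ Ideal.span {x, b} ^ n * Ideal.span {x, a} ^ n :=
        Ideal.mul_mono_left ((Ideal.span_singleton_le_iff_mem _).mpr hb_mem)
    _ = Ideal.span {b} * Ideal.span {a} := by
      rw [← mul_pow, mul_comm (Ideal.span {x, b}),
        span_pair_mul_span_pair_eq_span_singleton hn hab hx, Ideal.span_singleton_pow, hx,
        Ideal.span_singleton_mul_span_singleton, mul_comm]

end SpanPair

section ResidueField

variable {r : ℕ}

theorem card_mod_three_of_sq_add_self_add_one {F : Type*} [CommRing F] [IsDomain F] [Finite F]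
    {w : F} (hw : w ^ 2 + w + 1 = 0) (h3 : (3 : F) ≠ 0) : Nat.card F % 3 = 1 := by
  let := (Finite.isField_of_domain F).toField
  have hw0 : w ≠ 0 := by
    rintro rfl
    simp at hw
  have hw1 : w ≠ 1 := by
    rintro rfl
    exact h3 (by linear_combination hw)
  have hcube : w ^ 3 = 1 := by linear_combination (w - 1) * hw
  have horder : orderOf (Units.mk0 w hw0) = 3 :=
    orderOf_eq_prime (by ext; simpa) (by simpa [Units.ext_iff])
  have hdvd := orderOf_dvd_natCard (Units.mk0 w hw0)
  rw [horder, Nat.card_units] at hdvd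
  have := Nat.card_pos (α := F)
  omega

theorem eq_sq_of_dvd_sq {c : ℕ} (hp : r.Prime) (hr : r % 3 = 2) (hc : c ∣ r ^ 2) (hc1 : c ≠ 1)
    (hc3 : c % 3 = 1) : c = r ^ 2 := by
  obtain ⟨i, hi, rfl⟩ := (Nat.dvd_prime_pow hp).mp hc
  interval_cases i
  · simp at hc1
  · simp [hr] at hc3
  · rfl

theorem three_notMem_of_natCast_mem {R : Type*} [CommRing R] {M : Ideal R} (hM : M ≠ ⊤)
    (hr : r % 3 = 2) (hrM : (r : R) ∈ M) : (3 : R) ∉ M := by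
  intro h3
  have hcop : r.Coprime 3 := ((Nat.Prime.coprime_iff_not_dvd Nat.prime_three).mpr (by omega)).symm
  obtain ⟨a, b, hab⟩ := Nat.Coprime.cast (R := R) hcop
  refine (Ideal.ne_top_iff_one M).mp hM
    (hab ▸ add_mem (M.mul_mem_left a hrM) (M.mul_mem_left b ?_))
  exact_mod_cast h3

variable {B : Type*} [CommRing B] [IsDedekindDomain B] [Module.Free ℤ B]
  {I : Ideal B}

theorem natCast_mem_of_absNorm_eq_pow [I.IsPrime] {n : ℕ} (hI : Ideal.absNorm I = r ^ n) :
    (r : B) ∈ I :=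
  Ideal.IsPrime.mem_of_pow_mem ‹_› n (by exact_mod_cast hI ▸ Ideal.absNorm_mem I)

theorem isMaximal_of_absNorm_eq_sq {w : B} (hw : w ^ 2 + w + 1 = 0) (hp : r.Prime)
    (hr : r % 3 = 2) (hI : Ideal.absNorm I = r ^ 2) : I.IsMaximal := by
  have hI_ne : I ≠ ⊤ := by
    rintro rfl
    exact (Nat.one_lt_pow two_ne_zero hp.one_lt).ne (Ideal.absNorm_top.symm.trans hI)
  obtain ⟨M, hM, hIM⟩ := Ideal.exists_le_maximal I hI_ne
  obtain ⟨N, rfl⟩ := Ideal.dvd_iff_le.mpr hIM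
  have hM_dvd : Ideal.absNorm M ∣ r ^ 2 := hI ▸ Ideal.absNorm_dvd_absNorm_of_le hIM
  have hr0 : r ^ 2 ≠ 0 := pow_ne_zero 2 hp.ne_zero
  have hrM : (r : B) ∈ M := hM.isPrime.mem_of_pow_mem 2 <| by
    exact_mod_cast hI ▸ hIM (Ideal.absNorm_mem (M * N))
  have : Finite (B ⧸ M) := (Ideal.absNorm_ne_zero_iff M).mp (ne_zero_of_dvd_ne_zero hr0 hM_dvd)
  have hcard : Nat.card (B ⧸ M) % 3 = 1 := by
    refine card_mod_three_of_sq_add_self_add_one (w := Ideal.Quotient.mk M w) ?_ fun h ↦ ?_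
    · rw [← map_pow, ← map_add, ← map_one (Ideal.Quotient.mk M), ← map_add, hw, map_zero]
    · exact three_notMem_of_natCast_mem hM.ne_top hr hrM
        (Ideal.Quotient.eq_zero_iff_mem.mp (by rw [map_ofNat, h]))
  rw [map_mul, eq_sq_of_dvd_sq hp hr hM_dvd (mt Ideal.absNorm_eq_one_iff.mp hM.ne_top) hcard,
    mul_eq_left₀ hr0, Ideal.absNorm_eq_one_iff] at hI
  rwa [hI, Ideal.mul_top]

theorem exists_sub_mem_of_absNorm_eq_sq {A : Type*} [CommRing A] [Algebra A B] {w : A}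
    (hw : w ^ 2 + w + 1 = 0) [I.IsPrime] (hp : r.Prime) (hr : r % 3 = 2)
    (hI : Ideal.absNorm I = r ^ 2) (x : B) : ∃ a : A, x - algebraMap A B a ∈ I := by
  let φ : A →+* B ⧸ I := algebraMap A (B ⧸ I)
  have : Finite (B ⧸ I) :=
    (Ideal.absNorm_ne_zero_iff I).mp (hI ▸ pow_ne_zero 2 hp.ne_zero)
  have hcard : Nat.card φ.range % 3 = 1 := by
    refine card_mod_three_of_sq_add_self_add_one (w := φ.rangeRestrict w) ?_ fun h ↦ ?_
    · rw [← map_pow, ← map_add, ← map_one φ.rangeRestrict, ← map_add, hw, map_zero]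
    · exact three_notMem_of_natCast_mem (Ideal.IsPrime.ne_top ‹_›) hr
        (natCast_mem_of_absNorm_eq_pow hI) (Ideal.Quotient.eq_zero_iff_mem.mp
          (by rw [map_ofNat]; exact congrArg Subtype.val h))
  have hdvd : Nat.card φ.range ∣ r ^ 2 :=
    hI ▸ AddSubgroup.card_addSubgroup_dvd_card φ.range.toAddSubgroup
  have htop : φ.range.toAddSubgroup = ⊤ := AddSubgroup.eq_top_of_card_eq _
    ((eq_sq_of_dvd_sq hp hr hdvd (Finite.one_lt_card).ne' hcard).trans hI.symm)
  obtain ⟨a, ha⟩ : Ideal.Quotient.mk I x ∈ φ.range.toAddSubgroup := htop ▸ AddSubgroup.mem_top _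
  exact ⟨a, Ideal.Quotient.eq.mp ha.symm⟩

end ResidueField

/-- `L = k(θ)` is a pure cubic extension with `θ³ = ℓp` for primes `ℓ` and `p` that are congruent,
in some order, to `2` and `5` modulo `9`. It is used with `k = ℚ(ω)`, where `ω` is a primitive cube
root of unity. -/
structure IsPureCubic (k : Type*) {L : Type*} [Field k] [Field L] [Algebra k L] (θ : 𝓞 L)
    (ℓ p : ℕ) : Prop where
  finrank_eq : finrank k L = 3
  pow_three : θ ^ 3 = ℓ * p
  prime_left : ℓ.Prime
  prime_right : p.Prime
  mod_nine : ℓ % 9 = 2 ∧ p % 9 = 5 ∨ ℓ % 9 = 5 ∧ p % 9 = 2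

/-- The ideal `(θ, ℓ)`, which is the prime above `ℓ` when `θ³ = ℓp` as in `IsPureCubic`. -/
def ramifiedIdeal {R : Type*} [CommRing R] (θ : R) (ℓ : ℕ) : Ideal R := Ideal.span {θ, (ℓ : R)}

theorem exists_sq_add_self_add_one_eq_zero (k : Type*) [Field k] [NumberField k]
    [IsCyclotomicExtension {3} ℚ k] : ∃ w : 𝓞 k, w ^ 2 + w + 1 = 0 :=
  ⟨_, IsCyclotomicExtension.Rat.Three.eta_sq_add_eta_add_one
    (IsCyclotomicExtension.zeta_spec 3 ℚ k)⟩

theorem finrank_rat_eq_two (k : Type*) [Field k] [NumberField k] [IsCyclotomicExtension {3} ℚ k] :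
    finrank ℚ k = 2 :=
  (IsCyclotomicExtension.finrank k (cyclotomic.irreducible_rat three_pos)).trans (by decide)

theorem smul_natCast {G R : Type*} [Group G] [Semiring R] [MulSemiringAction G R] (g : G) (n : ℕ) :
    g • (n : R) = n :=
  map_natCast (MulSemiringAction.toRingHom G R g) n

section Norm

variable {k L : Type*} [Field k] [NumberField k] [Field L] [NumberField L] [Algebra k L]
  [IsGalois k L]

theorem algebraMap_intNorm_eq_prod (x : 𝓞 L) :
    algebraMap (𝓞 k) (𝓞 L) (Algebra.intNorm (𝓞 k) (𝓞 L) x) = ∏ g : Gal(L/k), g • x := by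
  apply FaithfulSMul.algebraMap_injective (𝓞 L) L
  rw [← IsScalarTower.algebraMap_apply, IsScalarTower.algebraMap_apply (𝓞 k) k L,
    Algebra.algebraMap_intNorm (L := L), Algebra.norm_eq_prod_automorphisms, map_prod]
  rfl

end Norm

namespace IsPureCubic

variable {k L : Type*} [Field k] [Field L] [Algebra k L] {θ : 𝓞 L} {ℓ p : ℕ}

theorem symm (h : IsPureCubic k θ ℓ p) : IsPureCubic k θ p ℓ where
  finrank_eq := h.finrank_eq
  pow_three := by rw [h.pow_three, mul_comm]
  prime_left := h.prime_right
  prime_right := h.prime_left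
  mod_nine := by have := h.mod_nine; omega

theorem mod_three_left (h : IsPureCubic k θ ℓ p) : ℓ % 3 = 2 := by
  have := h.mod_nine
  omega

theorem isCoprime (h : IsPureCubic k θ ℓ p) : IsCoprime (ℓ : 𝓞 L) p := by
  have hne : ℓ ≠ p := by have := h.mod_nine; omega
  exact ((Nat.coprime_primes h.prime_left h.prime_right).mpr hne).cast

theorem ramifiedIdeal_mul_ramifiedIdeal (h : IsPureCubic k θ ℓ p) :
    ramifiedIdeal θ ℓ * ramifiedIdeal θ p = Ideal.span {θ} :=
  span_pair_mul_span_pair_eq_span_singleton (by norm_num) h.isCoprime h.pow_three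

variable [NumberField L]

theorem ramifiedIdeal_pow_three (h : IsPureCubic k θ ℓ p) :
    ramifiedIdeal θ ℓ ^ 3 = Ideal.span {(ℓ : 𝓞 L)} :=
  span_pair_pow_eq_span_singleton (by norm_num) (by exact_mod_cast h.prime_right.ne_zero)
    h.isCoprime h.pow_three

theorem ramifiedIdeal_ne_bot (h : IsPureCubic k θ ℓ p) : ramifiedIdeal θ ℓ ≠ ⊥ := by
  intro hbot
  have := h.ramifiedIdeal_pow_three
  rw [hbot, Ideal.bot_pow three_ne_zero, eq_comm, Ideal.span_singleton_eq_bot] at this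
  exact h.prime_left.ne_zero (by exact_mod_cast this)

theorem ne_zero (h : IsPureCubic k θ ℓ p) : θ ≠ 0 := by
  rintro rfl
  have := h.pow_three
  rw [zero_pow three_ne_zero, eq_comm] at this
  exact mul_ne_zero h.prime_left.ne_zero h.prime_right.ne_zero (by exact_mod_cast this)

theorem exists_smul_eq_mul (h : IsPureCubic k θ ℓ p) (g : Gal(L/k)) :
    ∃ η : (𝓞 L)ˣ, η ^ 3 = 1 ∧ g • θ = η * θ := by
  have hcube : (g • θ) ^ 3 = θ ^ 3 := by
    rw [← smul_pow', h.pow_three, smul_mul', smul_natCast, smul_natCast]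
  obtain ⟨c, hc⟩ := (IsIntegrallyClosed.pow_dvd_pow_iff three_ne_zero).mp hcube.symm.dvd
  have hc3 : c ^ 3 = 1 := by
    apply mul_left_cancel₀ (pow_ne_zero 3 h.ne_zero)
    rw [← mul_pow, ← hc, hcube, mul_one]
  exact ⟨Units.ofPowEqOne c 3 hc3 three_ne_zero, Units.pow_ofPowEqOne hc3 three_ne_zero,
    hc.trans (mul_comm _ _)⟩

theorem smul_mem_ramifiedIdeal (h : IsPureCubic k θ ℓ p) (g : Gal(L/k)) {x : 𝓞 L}
    (hx : x ∈ ramifiedIdeal θ ℓ) : g • x ∈ ramifiedIdeal θ ℓ := by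
  obtain ⟨η, -, hη⟩ := h.exists_smul_eq_mul g
  obtain ⟨a, b, rfl⟩ := Ideal.mem_span_pair.mp hx
  rw [smul_add, smul_mul', smul_mul', smul_natCast, hη]
  exact add_mem (Ideal.mul_mem_left _ _ (Ideal.mul_mem_left _ _ (Ideal.subset_span (by simp))))
    (Ideal.mul_mem_left _ _ (Ideal.subset_span (by simp)))

variable [NumberField k] [IsCyclotomicExtension {3} ℚ k]

theorem finrank_rat (h : IsPureCubic k θ ℓ p) : finrank ℚ L = 6 := by
  rw [← finrank_mul_finrank ℚ k L, finrank_rat_eq_two, h.finrank_eq]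

theorem absNorm_ramifiedIdeal (h : IsPureCubic k θ ℓ p) :
    Ideal.absNorm (ramifiedIdeal θ ℓ) = ℓ ^ 2 := by
  apply Nat.pow_left_injective three_ne_zero
  change _ ^ 3 = _ ^ 3
  rw [← map_pow, h.ramifiedIdeal_pow_three, Ideal.absNorm_span_natCast,
    RingOfIntegers.rank, h.finrank_rat, ← pow_mul]

theorem isMaximal_ramifiedIdeal (h : IsPureCubic k θ ℓ p) : (ramifiedIdeal θ ℓ).IsMaximal := by
  obtain ⟨w, hw⟩ := exists_sq_add_self_add_one_eq_zero k
  exact isMaximal_of_absNorm_eq_sq (w := algebraMap (𝓞 k) (𝓞 L) w)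
    (by rw [← map_pow, ← map_add, ← map_one (algebraMap (𝓞 k) (𝓞 L)), ← map_add, hw, map_zero])
    h.prime_left h.mod_three_left h.absNorm_ramifiedIdeal

variable [IsGalois k L]

theorem smul_sub_mem_ramifiedIdeal (h : IsPureCubic k θ ℓ p) (g : Gal(L/k)) (x : 𝓞 L) :
    g • x - x ∈ ramifiedIdeal θ ℓ := by
  obtain ⟨w, hw⟩ := exists_sq_add_self_add_one_eq_zero k
  have := h.isMaximal_ramifiedIdeal.isPrime
  obtain ⟨a, ha⟩ := exists_sub_mem_of_absNorm_eq_sq hw h.prime_left h.mod_three_left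
    h.absNorm_ramifiedIdeal x
  have hmem := sub_mem (h.smul_mem_ramifiedIdeal g ha) ha
  rwa [smul_sub, smul_algebraMap, sub_sub_sub_cancel_right] at hmem

theorem algebraMap_intNorm_sub_pow_three_mem (h : IsPureCubic k θ ℓ p) (x : 𝓞 L) :
    algebraMap (𝓞 k) (𝓞 L) (Algebra.intNorm (𝓞 k) (𝓞 L) x) - x ^ 3 ∈ ramifiedIdeal θ ℓ := by
  have hsmul (g : Gal(L/k)) : Ideal.Quotient.mk (ramifiedIdeal θ ℓ) (g • x) =
      Ideal.Quotient.mk (ramifiedIdeal θ ℓ) x :=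
    Ideal.Quotient.eq.mpr (h.smul_sub_mem_ramifiedIdeal g x)
  rw [← Ideal.Quotient.eq, algebraMap_intNorm_eq_prod, map_prod, map_pow]
  simp only [hsmul, Finset.prod_const, Finset.card_univ, ← Nat.card_eq_fintype_card,
    IsGalois.card_aut_eq_finrank, h.finrank_eq]

end IsPureCubic

theorem exists_mul_eq_mul_and_notMem {R : Type*} [CommRing R] [IsDedekindDomain R] (M : Ideal R)
    [M.IsPrime] (hM : M ≠ ⊥) (a b : R) :
    ∃ c d, a * d = b * c ∧ (c ∉ M ∨ d ∉ M) := by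
  have := IsLocalization.AtPrime.isDiscreteValuationRing_of_dedekind_domain R hM
    (Localization.AtPrime M)
  have cross {a b : R} (hab : algebraMap R (Localization.AtPrime M) a ∣ algebraMap R _ b) :
      ∃ c d, a * d = b * c ∧ c ∉ M := by
    obtain ⟨y, hy⟩ := hab
    obtain ⟨⟨d, c⟩, hdc⟩ := IsLocalization.surj M.primeCompl y
    refine ⟨c, d, ?_, c.2⟩
    apply IsLocalization.injective (Localization.AtPrime M) M.primeCompl_le_nonZeroDivisors
    rw [map_mul, map_mul, hy, ← hdc]
    ring
  obtain hab | hba := ValuationRing.dvd_total (algebraMap R (Localization.AtPrime M) a)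
    (algebraMap R _ b)
  · obtain ⟨c, d, hcd, hc⟩ := cross hab
    exact ⟨c, d, hcd, .inl hc⟩
  · obtain ⟨d, c, hcd, hd⟩ := cross hba
    exact ⟨c, d, hcd.symm, .inr hd⟩

theorem sq_eq_one_of_pow_three_mul_eq {F : Type*} [CommRing F] [IsDomain F] {ℓ : ℕ}
    (hcard : Nat.card F = ℓ ^ 2)
    (hℓ : ℓ ^ 2 % 9 = 4 ∨ ℓ ^ 2 % 9 = 7) {u c d : F} (hu : u ^ 6 = 1) (hc : c ≠ 0)
    (hcd : u * c ^ 3 = d ^ 3) : u ^ 2 = 1 := by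
  have : Finite F := Nat.finite_of_card_ne_zero (by omega)
  let := (Finite.isField_of_domain F).toField
  have hd : d ≠ 0 := by
    rintro rfl
    have : u ≠ 0 := by rintro rfl; simp at hu
    simp_all
  set y := Units.mk0 (d / c) (div_ne_zero hd hc) with hy_def
  have hy : (y : F) ^ 3 = u := by
    rw [hy_def, Units.val_mk0, div_pow, ← hcd, mul_div_cancel_right₀ _ (pow_ne_zero 3 hc)]
  have h18 : y ^ 18 = 1 := by
    ext
    rw [Units.val_pow_eq_pow_val, pow_mul _ 3 6, hy, hu, Units.val_one]
  have hcard_units : y ^ (ℓ ^ 2 - 1) = 1 := by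
    rw [← hcard, ← Nat.card_units, pow_card_eq_one']
  obtain ⟨m, j, hmj⟩ : ∃ m j, (ℓ ^ 2 - 1) * m = 18 * j + 6 := by
    obtain hℓ | hℓ := hℓ
    · exact ⟨2, ℓ ^ 2 / 9, by omega⟩
    · exact ⟨4, 2 * (ℓ ^ 2 / 9) + 1, by omega⟩
  have h6 : y ^ 6 = 1 := by
    calc y ^ 6 = y ^ (18 * j + 6) := by rw [pow_add, pow_mul, h18, one_pow, one_mul]
      _ = 1 := by rw [← hmj, pow_mul, hcard_units, one_pow]
  rw [← hy, ← pow_mul, ← Units.val_pow_eq_pow_val, h6, Units.val_one]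

theorem units_pow_six_eq_one {k : Type*} [Field k] [NumberField k] [IsCyclotomicExtension {3} ℚ k]
    (u : (𝓞 k)ˣ) : u ^ 6 = 1 := by
  have hζ := IsCyclotomicExtension.zeta_spec 3 ℚ k
  have hη : (hζ.toInteger_isPrimitiveRoot.isUnit (by decide)).unit ^ 3 = 1 :=
    Units.ext hζ.toInteger_cube_eq_one
  have hmem := IsCyclotomicExtension.Rat.Three.Units.mem hζ u
  set η := (hζ.toInteger_isPrimitiveRoot.isUnit (by decide)).unit
  have hη6 : η ^ 6 = 1 := by rw [pow_mul η 3 2, hη, one_pow]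
  have hη12 : (η ^ 2) ^ 6 = 1 := by rw [pow_right_comm, hη6, one_pow]
  have neg_pow (v : (𝓞 k)ˣ) : (-v) ^ 6 = v ^ 6 := Even.neg_pow (by decide) v
  simp only [List.mem_cons, List.not_mem_nil, or_false] at hmem
  rcases hmem with rfl | rfl | rfl | rfl | rfl | rfl <;> simp only [neg_pow, one_pow, hη6, hη12]

namespace IsPureCubic

variable {k L : Type*} [Field k] [NumberField k] [IsCyclotomicExtension {3} ℚ k] [Field L]
  [NumberField L] [Algebra k L] [IsGalois k L] {θ : 𝓞 L} {ℓ p : ℕ}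

theorem sq_left_mod_nine {k L : Type*} [Field k] [Field L] [Algebra k L] {θ : 𝓞 L}
    (h : IsPureCubic k θ ℓ p) : ℓ ^ 2 % 9 = 4 ∨ ℓ ^ 2 % 9 = 7 := by
  obtain h | h := h.mod_nine <;> simp [Nat.pow_mod, h]

theorem sq_sub_one_mem_ramifiedIdeal (h : IsPureCubic k θ ℓ p) {a b : 𝓞 L} (ha : a ≠ 0)
    {u : (𝓞 k)ˣ}
    (hab : Algebra.intNorm (𝓞 k) (𝓞 L) b = u * Algebra.intNorm (𝓞 k) (𝓞 L) a) :
    algebraMap (𝓞 k) (𝓞 L) (u ^ 2 - 1) ∈ ramifiedIdeal θ ℓ := by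
  set P := ramifiedIdeal θ ℓ
  set N := Algebra.intNorm (𝓞 k) (𝓞 L)
  have : P.IsPrime := h.isMaximal_ramifiedIdeal.isPrime
  let φ := Ideal.Quotient.mk P
  have φ_eq_zero {x : 𝓞 L} : φ x = 0 ↔ x ∈ P := Ideal.Quotient.eq_zero_iff_mem
  obtain ⟨c, d, hcd, hnotMem⟩ := exists_mul_eq_mul_and_notMem P h.ramifiedIdeal_ne_bot a b
  have hnorm : (u : 𝓞 k) * N c = N d := by
    apply mul_left_cancel₀ (Algebra.intNorm_ne_zero.mpr ha)
    rw [← map_mul _ a d, hcd, map_mul, hab]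
    ring
  have hcube (x : 𝓞 L) : φ (algebraMap _ _ (N x)) = φ x ^ 3 := by
    rw [← map_pow]
    exact Ideal.Quotient.eq.mpr (h.algebraMap_intNorm_sub_pow_three_mem x)
  have hφ : φ (algebraMap _ _ (u : 𝓞 k)) * φ c ^ 3 = φ d ^ 3 := by
    rw [← hcube, ← hcube, ← hnorm, map_mul, map_mul]
  have hc : φ c ≠ 0 := by
    intro hc
    have hd : φ d = 0 := by
      rw [← pow_eq_zero_iff three_ne_zero, ← hφ, hc, zero_pow three_ne_zero, mul_zero]
    exact hnotMem.elim (· (φ_eq_zero.mp hc)) (· (φ_eq_zero.mp hd))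
  have hu : φ (algebraMap _ _ (u : 𝓞 k)) ^ 6 = 1 := by
    rw [← map_pow, ← map_pow, ← Units.val_pow_eq_pow_val, units_pow_six_eq_one, Units.val_one,
      map_one, map_one]
  have hcard : Nat.card (𝓞 L ⧸ P) = ℓ ^ 2 := h.absNorm_ramifiedIdeal
  rw [← φ_eq_zero, map_sub, map_sub, map_pow, map_pow, map_one, map_one, sub_eq_zero]
  exact sq_eq_one_of_pow_three_mul_eq hcard h.sq_left_mod_nine hu hc hφ

theorem sq_eq_one_of_intNorm_eq_mul_intNorm (h : IsPureCubic k θ ℓ p) {a b : 𝓞 L} (ha : a ≠ 0)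
    {u : (𝓞 k)ˣ}
    (hab : Algebra.intNorm (𝓞 k) (𝓞 L) b = u * Algebra.intNorm (𝓞 k) (𝓞 L) a) : u ^ 2 = 1 := by
  set v : 𝓞 k := u ^ 2
  have hmem := h.sq_sub_one_mem_ramifiedIdeal ha hab
  have hcube : (v - 1) * (v ^ 2 + v + 1) = 0 := by
    have : (u : 𝓞 k) ^ 6 = 1 := by
      rw [← Units.val_pow_eq_pow_val, units_pow_six_eq_one, Units.val_one]
    linear_combination this
  obtain hv1 | hv1 := mul_eq_zero.mp hcube
  · ext1
    exact sub_eq_zero.mp hv1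
  · have h3 : (3 : 𝓞 L) = algebraMap (𝓞 k) (𝓞 L) (v - 1) * algebraMap (𝓞 k) (𝓞 L) (- v - 2) := by
      rw [← map_mul, ← map_ofNat (algebraMap (𝓞 k) (𝓞 L))]
      congr 1
      linear_combination hv1
    have hmax := h.isMaximal_ramifiedIdeal
    refine absurd ?_ (three_notMem_of_natCast_mem hmax.ne_top h.mod_three_left
      (Ideal.subset_span (Set.mem_insert_of_mem _ rfl)))
    exact h3 ▸ Ideal.mul_mem_right _ _ hmem

end IsPureCubic

section Different

variable {k L : Type*} [Field k] [NumberField k] [Field L] [NumberField L] [Algebra k L]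
  [IsGalois k L]

theorem algebraMap_intTrace_eq_sum (x : 𝓞 L) :
    algebraMap (𝓞 k) (𝓞 L) (Algebra.intTrace (𝓞 k) (𝓞 L) x) = ∑ g : Gal(L/k), g • x := by
  apply FaithfulSMul.algebraMap_injective (𝓞 L) L
  rw [← IsScalarTower.algebraMap_apply, IsScalarTower.algebraMap_apply (𝓞 k) k L,
    Algebra.algebraMap_intTrace (L := L), trace_eq_sum_automorphisms, map_sum]
  rfl

theorem intTrace_mem_comap_of_smul_eq {J : Ideal (𝓞 L)} (hJ : ∀ g : Gal(L/k), g • J = J) {x : 𝓞 L}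
    (hx : x ∈ J) : Algebra.intTrace (𝓞 k) (𝓞 L) x ∈ J.comap (algebraMap (𝓞 k) (𝓞 L)) := by
  rw [Ideal.mem_comap, algebraMap_intTrace_eq_sum]
  exact sum_mem fun g _ ↦ hJ g ▸ Ideal.smul_mem_pointwise_smul g x J hx

/-- The traces of the elements of `M⁻¹ = a⁻¹J` are integral. -/
theorem dvd_differentIdeal_of_mul_eq_span_singleton {J M : Ideal (𝓞 L)}
    (hJ : ∀ g : Gal(L/k), g • J = J) {a : 𝓞 k} (ha : a ≠ 0)
    (hcomap : J.comap (algebraMap (𝓞 k) (𝓞 L)) = Ideal.span {a})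
    (hJM : J * M = Ideal.span {algebraMap (𝓞 k) (𝓞 L) a}) : M ∣ differentIdeal (𝓞 k) (𝓞 L) := by
  have hM : M ≠ ⊥ := by
    rintro rfl
    rw [Ideal.mul_bot, eq_comm, Ideal.span_singleton_eq_bot] at hJM
    exact ha (by simpa using hJM)
  rw [Ideal.dvd_iff_le, differentialIdeal_le_iff (K := k) (L := L) hM]
  rintro _ ⟨y, hy, rfl⟩
  have hay : algebraMap (𝓞 L) L (algebraMap (𝓞 k) (𝓞 L) a) * y ∈
      (J : FractionalIdeal (nonZeroDivisors (𝓞 L)) L) := by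
    have hM' : (M : FractionalIdeal (nonZeroDivisors (𝓞 L)) L) ≠ 0 := by simpa
    rw [← mul_inv_cancel_right₀ hM' (J : FractionalIdeal (nonZeroDivisors (𝓞 L)) L),
      ← FractionalIdeal.coeIdeal_mul, hJM]
    exact FractionalIdeal.mul_mem_mul (FractionalIdeal.mem_coeIdeal_of_mem _
      (Ideal.mem_span_singleton_self _)) hy
  obtain ⟨x, hx, hxy⟩ := (FractionalIdeal.mem_coeIdeal _).mp hay
  obtain ⟨c, hc⟩ := Ideal.mem_span_singleton.mp (hcomap ▸ intTrace_mem_comap_of_smul_eq hJ hx)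
  refine Submodule.mem_one.mpr ⟨c, ?_⟩
  apply mul_left_cancel₀ (show algebraMap (𝓞 k) k a ≠ 0 by simpa)
  rw [← map_mul, ← hc, Algebra.algebraMap_intTrace (L := L), hxy,
    ← IsScalarTower.algebraMap_apply, IsScalarTower.algebraMap_apply (𝓞 k) k L, ← Algebra.smul_def,
    map_smul, smul_eq_mul]
  rfl

theorem exists_mul_eq_span_singleton_of_smul_eq [IsPrincipalIdealRing (𝓞 k)] {J : Ideal (𝓞 L)}
    (hJ_ne : J ≠ ⊥) (hJ : ∀ g : Gal(L/k), g • J = J) :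
    ∃ (a : 𝓞 k) (M : Ideal (𝓞 L)), a ≠ 0 ∧ M ∣ differentIdeal (𝓞 k) (𝓞 L) ∧
      J * M = Ideal.span {algebraMap (𝓞 k) (𝓞 L) a} := by
  obtain ⟨a, ha⟩ := IsPrincipalIdealRing.principal (J.comap (algebraMap (𝓞 k) (𝓞 L)))
  have ha0 : a ≠ 0 := by
    rintro rfl
    rw [Ideal.submodule_span_eq, Set.singleton_zero, Ideal.span_zero] at ha
    exact hJ_ne (Ideal.eq_bot_of_comap_eq_bot ha)
  have hmem : a ∈ J.comap (algebraMap (𝓞 k) (𝓞 L)) := ha ▸ Ideal.mem_span_singleton_self a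
  obtain ⟨M, hM⟩ := Ideal.dvd_iff_le.mpr ((Ideal.span_singleton_le_iff_mem J).mpr hmem)
  exact ⟨a, M, ha0, dvd_differentIdeal_of_mul_eq_span_singleton hJ ha0 ha hM.symm, hM.symm⟩

end Different

theorem adjoin_singleton_eq_top_of_finrank_prime {k L : Type*} [Field k] [Field L] [Algebra k L]
    (hp : (finrank k L).Prime) {t : L} (ht : t ∉ (algebraMap k L).range) :
    Algebra.adjoin k {t} = ⊤ := by
  have := Subalgebra.isSimpleOrder_of_finrank_prime k L hp
  refine (eq_bot_or_eq_top _).resolve_left fun hbot ↦ ht ?_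
  exact Algebra.mem_bot.mp (hbot ▸ Algebra.self_mem_adjoin_singleton k t)

theorem aeval_derivative_mem_differentIdeal_of_aeval_eq_zero {k L : Type*} [Field k] [NumberField k]
    [Field L] [NumberField L] [Algebra k L] {t : 𝓞 L}
    (ht : Algebra.adjoin k {algebraMap (𝓞 L) L t} = ⊤) {f : (𝓞 k)[X]} (hf : aeval t f = 0) :
    aeval t (derivative f) ∈ differentIdeal (𝓞 k) (𝓞 L) := by
  obtain ⟨g, rfl⟩ := minpoly.isIntegrallyClosed_dvd (Algebra.IsIntegral.isIntegral t) hf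
  rw [derivative_mul, map_add, map_mul, map_mul, minpoly.aeval, zero_mul, add_zero]
  exact Ideal.mul_mem_right _ _ (aeval_derivative_mem_differentIdeal (𝓞 k) k L t ht)

theorem cubic_eq_zero_of_one_sub_mul_eq {R : Type*} [CommRing R] [IsDomain R] (h3 : (3 : R) ≠ 0)
    {w t θ m : R} (hw : w ^ 2 + w + 1 = 0) (ht : (1 - w) * t = θ - 1) (hθ : θ ^ 3 = 1 + 9 * m) :
    t ^ 3 + (2 + w) * t ^ 2 + (1 + w) * t - m * (w - w ^ 2) = 0 := by
  apply (mul_eq_zero.mp (?_ : (9 : R) * _ = 0)).resolve_left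
  · rw [show (9 : R) = 3 ^ 2 by norm_num]
    exact pow_ne_zero 2 h3
  · obtain rfl : θ = 1 + (1 - w) * t := by linear_combination -ht
    grind

theorem exists_one_sub_mul_eq_sub_one {R : Type*} [CommRing R] [IsDomain R] [IsIntegrallyClosed R]
    (h3 : (3 : R) ≠ 0) {w θ m : R} (hw : w ^ 2 + w + 1 = 0) (hθ : θ ^ 3 = 1 + 9 * m) :
    ∃ t, (1 - w) * t = θ - 1 := by
  let φ := algebraMap R (FractionRing R)
  have hφ : Function.Injective φ := IsFractionRing.injective R (FractionRing R)
  have hw1 : φ (1 - w) ≠ 0 := by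
    refine (map_ne_zero_iff φ hφ).mpr fun hw1 ↦ h3 ?_
    linear_combination hw + (w + 2) * hw1
  set t := φ (θ - 1) / φ (1 - w)
  have ht : φ (1 - w) * t = φ (θ - 1) := mul_div_cancel₀ _ hw1
  have hcubic : t ^ 3 + (2 + φ w) * t ^ 2 + (1 + φ w) * t - φ m * (φ w - φ w ^ 2) = 0 := by
    refine cubic_eq_zero_of_one_sub_mul_eq (θ := φ θ) ?_ ?_ ?_ ?_
    · rw [← map_ofNat φ]
      exact (map_ne_zero_iff φ hφ).mpr h3
    · simpa using congrArg φ hw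
    · simpa using ht
    · simpa [map_ofNat φ] using congrArg φ hθ
  have hint : IsIntegral R t :=
    ⟨X ^ 3 + C (2 + w) * X ^ 2 + C (1 + w) * X - C (m * (w - w ^ 2)), by monicity!,
      by simpa [φ, map_ofNat (algebraMap R _)] using hcubic⟩
  obtain ⟨s, hs⟩ := IsIntegrallyClosed.isIntegral_iff.mp hint
  exact ⟨s, hφ (by rw [map_mul, hs, ht])⟩

namespace IsPureCubic

variable {k L : Type*} [Field k] [Field L] [Algebra k L] {θ : 𝓞 L} {ℓ p : ℕ}

theorem exists_mul_eq_one_add_nine_mul (h : IsPureCubic k θ ℓ p) : ∃ m : ℕ, ℓ * p = 1 + 9 * m := by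
  refine ⟨ℓ * p / 9, ?_⟩
  have : ℓ * p % 9 = 1 := by
    obtain h | h := h.mod_nine <;> rw [Nat.mul_mod, h.1, h.2]
  omega

theorem not_dvd (h : IsPureCubic k θ ℓ p) : ¬ ℓ ∣ p := by
  rw [Nat.prime_dvd_prime_iff_eq h.prime_left h.prime_right]
  rintro rfl
  have := h.mod_nine
  omega

theorem not_sq_dvd_mul (h : IsPureCubic k θ ℓ p) {r : ℤ} (hr : Prime r) :
    ¬ r ^ 2 ∣ (ℓ * p : ℤ) := by
  have hcop := (Nat.coprime_primes h.prime_left h.prime_right).mpr fun hne ↦ h.not_dvd hne.dvd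
  have hsq : Squarefree (ℓ * p) := (Nat.squarefree_mul hcop).mpr
    ⟨h.prime_left.squarefree, h.prime_right.squarefree⟩
  intro hdvd
  refine hr.not_isUnit (Int.squarefree_natCast.mpr hsq r ?_)
  rw [← sq]
  exact_mod_cast hdvd

variable [NumberField k]

theorem notMem_range_algebraMap (h : IsPureCubic k θ ℓ p) (hk : ¬ 3 ∣ finrank ℚ k) :
    algebraMap (𝓞 L) L θ ∉ (algebraMap k L).range := by
  rintro ⟨x, hx⟩
  have hx3 : x ^ 3 = algebraMap ℚ k ((ℓ : ℚ) * p) := by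
    apply (algebraMap k L).injective
    rw [map_pow, hx, ← map_pow, h.pow_three]
    simp
  have hnorm : Algebra.norm ℚ x ^ 3 = ((ℓ : ℚ) * p) ^ finrank ℚ k := by
    rw [← map_pow, hx3, Algebra.norm_algebraMap]
  have := Fact.mk h.prime_left
  have hℓ : (ℓ : ℚ) ≠ 0 := by exact_mod_cast h.prime_left.ne_zero
  have hp : (p : ℚ) ≠ 0 := by exact_mod_cast h.prime_right.ne_zero
  have hval := congrArg (padicValRat ℓ) hnorm
  rw [padicValRat.pow, padicValRat.pow, padicValRat.mul hℓ hp, padicValRat.self h.prime_left.one_lt,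
    padicValRat.of_nat, padicValNat.eq_zero_of_not_dvd h.not_dvd] at hval
  omega

variable [IsCyclotomicExtension {3} ℚ k] [NumberField L]

theorem isGalois_and_isCyclic (h : IsPureCubic k θ ℓ p) : IsGalois k L ∧ IsCyclic Gal(L/k) := by
  have hroots : (primitiveRoots (finrank k L) k).Nonempty := by
    rw [h.finrank_eq]
    exact ⟨_, (mem_primitiveRoots three_pos).mpr (IsCyclotomicExtension.zeta_spec 3 ℚ k)⟩
  refine ((isCyclic_tfae k L hroots).out 0 2 :).mpr ⟨algebraMap (𝓞 L) L θ, ⟨ℓ * p, ?_⟩, ?_⟩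
  · rw [h.finrank_eq, ← map_pow, h.pow_three]
    simp
  · rw [← IntermediateField.toSubalgebra_inj, IntermediateField.top_toSubalgebra,
      IntermediateField.adjoin_simple_toSubalgebra_of_isAlgebraic (.of_finite k _),
      adjoin_singleton_eq_top_of_finrank_prime (h.finrank_eq ▸ Nat.prime_three)
        (h.notMem_range_algebraMap (by rw [finrank_rat_eq_two]; decide))]

theorem sq_mem_differentIdeal (h : IsPureCubic k θ ℓ p) :
    θ ^ 2 ∈ differentIdeal (𝓞 k) (𝓞 L) := by
  obtain ⟨m, hm⟩ := h.exists_mul_eq_one_add_nine_mul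
  obtain ⟨w, hw⟩ := exists_sq_add_self_add_one_eq_zero k
  let v := algebraMap (𝓞 k) (𝓞 L) w
  have hv : v ^ 2 + v + 1 = 0 := by
    rw [← map_pow, ← map_add, ← map_one (algebraMap (𝓞 k) (𝓞 L)), ← map_add, hw, map_zero]
  have hθ : θ ^ 3 = 1 + 9 * m := by
    rw [h.pow_three]
    exact_mod_cast hm
  have h3 : (3 : 𝓞 L) ≠ 0 := by norm_num
  obtain ⟨t, ht⟩ := exists_one_sub_mul_eq_sub_one h3 hv hθ
  have ht_top : Algebra.adjoin k {algebraMap (𝓞 L) L t} = ⊤ := by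
    refine adjoin_singleton_eq_top_of_finrank_prime (h.finrank_eq ▸ Nat.prime_three) ?_
    rintro ⟨x, hx⟩
    refine h.notMem_range_algebraMap (by rw [finrank_rat_eq_two]; decide)
      ⟨1 + (1 - algebraMap (𝓞 k) k w) * x, ?_⟩
    rw [← sub_add_cancel θ 1, ← ht, map_add, map_mul, map_sub, map_one, hx, map_add, map_mul,
      map_sub, map_one, add_comm]
    rfl
  obtain ⟨c, hc⟩ : ∃ c, c = m * (w - w ^ 2) := ⟨_, rfl⟩
  let f : (𝓞 k)[X] := X ^ 3 + C (2 + w) * X ^ 2 + C (1 + w) * X - C c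
  have hf : aeval t f = 0 := by
    simpa [f, hc, v, map_ofNat (algebraMap (𝓞 k) (𝓞 L))] using
      cubic_eq_zero_of_one_sub_mul_eq h3 hv ht hθ
  have hderiv : aeval t (derivative f) = -v ^ 2 * θ ^ 2 := by
    calc aeval t (derivative f) = 3 * t ^ 2 + (2 + v) * (2 * t) + (1 + v) := by
          simp only [f, v, map_add, map_mul, map_pow, map_one, map_ofNat (algebraMap (𝓞 k) (𝓞 L)),
            derivative_sub, derivative_mul, derivative_X_pow_succ, derivative_X,
            derivative_C, derivative_one, Nat.cast_ofNat, Nat.cast_one, pow_one, zero_mul, zero_add,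
            add_zero, sub_zero, mul_one, aeval_C, aeval_X]
          ring
      _ = -v ^ 2 * θ ^ 2 := by
          rw [show θ = 1 + (1 - v) * t by linear_combination -ht]
          linear_combination ((v ^ 2 - 3 * v + 3) * t ^ 2 + (4 - 2 * v) * t + 1) * hv
  have hmem := aeval_derivative_mem_differentIdeal_of_aeval_eq_zero ht_top hf
  rw [hderiv] at hmem
  convert Ideal.mul_mem_left _ (-v) hmem using 1
  linear_combination -(v - 1) * θ ^ 2 * hv

theorem differentIdeal_dvd (h : IsPureCubic k θ ℓ p) :
    differentIdeal (𝓞 k) (𝓞 L) ∣ ramifiedIdeal θ ℓ ^ 2 * ramifiedIdeal θ p ^ 2 := by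
  rw [← mul_pow, h.ramifiedIdeal_mul_ramifiedIdeal, Ideal.span_singleton_pow,
    Ideal.dvd_span_singleton]
  exact h.sq_mem_differentIdeal

end IsPureCubic

theorem exists_pow_mul_pow_eq_of_dvd {R : Type*} [CommRing R] [IsDedekindDomain R]
    {P Q M : Ideal R} (hP : Prime P) (hQ : Prime Q) {m n : ℕ} (hM : M ∣ P ^ m * Q ^ n) :
    ∃ i ≤ m, ∃ j ≤ n, M = P ^ i * Q ^ j := by
  obtain ⟨I, J, hI, hJ, rfl⟩ := exists_dvd_and_dvd_of_dvd_mul hM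
  obtain ⟨i, hi, hI⟩ := (dvd_prime_pow hP m).mp hI
  obtain ⟨j, hj, hJ⟩ := (dvd_prime_pow hQ n).mp hJ
  exact ⟨i, hi, j, hj, by rw [associated_iff_eq.mp hI, associated_iff_eq.mp hJ]⟩

section Hilbert90

variable {k L : Type*} [Field k] [Field L] [Algebra k L] [FiniteDimensional k L]

theorem exists_sum_mul_pow_apply_ne_zero (σ : Gal(L/k)) {f : ℕ → L} (hf : f 0 ≠ 0) :
    ∃ c, ∑ i ∈ Finset.range (orderOf σ), f i * (σ ^ i) c ≠ 0 := by
  by_contra! hsum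
  have hinj : Function.Injective
      fun i : Fin (orderOf σ) ↦ ((σ ^ (i : ℕ) : Gal(L/k)) : L →* L) := by
    intro i j hij
    refine Fin.ext (pow_injOn_Iio_orderOf i.2 j.2 ?_)
    ext x
    exact DFunLike.congr_fun hij x
  have hindep := (linearIndependent_monoidHom L L).comp _ hinj
  have hzero := Fintype.linearIndependent_iff.mp hindep (fun i ↦ f i) ?_ ⟨0, orderOf_pos σ⟩
  · exact hf hzero
  · ext c
    have := hsum c
    rw [Finset.sum_range] at this
    simpa using this

/-- Mathlib's form of Hilbert's Theorem 90 for cyclic extensions is restricted to `Type`. -/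
theorem exists_mul_apply_eq_of_norm_eq_one [IsGalois k L] {σ : Gal(L/k)}
    (hσ : ∀ g, g ∈ Subgroup.zpowers σ) {x : L} (hx : Algebra.norm k x = 1) :
    ∃ y ≠ 0, x * σ y = y := by
  set f : ℕ → L := fun i ↦ ∏ j ∈ Finset.range i, (σ ^ j) x with hf
  have hf_succ (i : ℕ) : x * σ (f i) = f (i + 1) := by
    simp only [hf, map_prod, ← AlgEquiv.mul_apply, ← pow_succ', Finset.prod_range_succ', pow_zero,
      AlgEquiv.one_apply, mul_comm x]
  have hf_order : f (orderOf σ) = 1 := by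
    classical
    rw [hf, ← map_one (algebraMap k L), ← hx, Algebra.norm_eq_prod_automorphisms,
      ← IsCyclic.image_range_orderOf hσ, Finset.prod_image fun i hi j hj ↦ pow_injOn_Iio_orderOf
        (by simpa using hi) (by simpa using hj)]
  obtain ⟨c, hc⟩ := exists_sum_mul_pow_apply_ne_zero σ (f := f) (by simp [hf])
  refine ⟨_, hc, ?_⟩
  calc x * σ (∑ i ∈ Finset.range (orderOf σ), f i * (σ ^ i) c)
      = ∑ i ∈ Finset.range (orderOf σ), f (i + 1) * (σ ^ (i + 1)) c := by
        simp_rw [map_sum, Finset.mul_sum, map_mul, ← mul_assoc, hf_succ, pow_succ',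
          AlgEquiv.mul_apply]
    _ = ∑ i ∈ Finset.range (orderOf σ), f i * (σ ^ i) c := by
        apply add_right_cancel (b := f 0 * (σ ^ 0) c)
        rw [← Finset.sum_range_succ' fun i ↦ f i * (σ ^ i) c, Finset.sum_range_succ, hf_order,
          pow_orderOf_eq_one]
        simp [hf]

end Hilbert90

section IntNorm

variable {k L : Type*} [Field k] [NumberField k] [Field L] [NumberField L] [Algebra k L]
  [IsGalois k L]

theorem exists_mul_smul_eq_mul_of_intNorm_eq {σ : Gal(L/k)} (hσ : ∀ g, g ∈ Subgroup.zpowers σ)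
    {a b : 𝓞 L} (ha : a ≠ 0)
    (hab : Algebra.intNorm (𝓞 k) (𝓞 L) b = Algebra.intNorm (𝓞 k) (𝓞 L) a) :
    ∃ y ≠ 0, b * σ • y = a * y := by
  have ha' : algebraMap (𝓞 L) L a ≠ 0 := by simpa
  have hnorm : Algebra.norm k (algebraMap (𝓞 L) L b * (algebraMap (𝓞 L) L a)⁻¹) = 1 := by
    rw [map_mul, Algebra.norm_inv, ← Algebra.algebraMap_intNorm (A := 𝓞 k),
      ← Algebra.algebraMap_intNorm (A := 𝓞 k), hab, mul_inv_cancel₀]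
    simpa using (Algebra.intNorm_ne_zero (A := 𝓞 k)).mpr ha
  obtain ⟨z, hz, hσz⟩ := exists_mul_apply_eq_of_norm_eq_one hσ hnorm
  obtain ⟨d, hd, hint⟩ := IsAlgebraic.exists_integral_multiple
    ((IsFractionRing.isAlgebraic_iff ℤ ℚ L).mpr (.of_finite ℚ z))
  refine ⟨⟨d • z, hint⟩, ?_, ?_⟩
  · exact fun h ↦ smul_ne_zero hd hz (congrArg (algebraMap (𝓞 L) L) h)
  · apply RingOfIntegers.ext
    change algebraMap (𝓞 L) L b * σ (d • z) = algebraMap (𝓞 L) L a * (d • z)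
    rw [map_zsmul, mul_smul_comm, mul_smul_comm]
    nth_rw 2 [← hσz]
    field_simp

end IntNorm

theorem smul_eq_self_of_forall_mem_zpowers {G α : Type*} [Group G] [MulAction G α] {σ : G}
    (hσ : ∀ g, g ∈ Subgroup.zpowers σ) {x : α} (hx : σ • x = x) (g : G) : g • x = x :=
  (Subgroup.zpowers_le (H := MulAction.stabilizer G x)).mpr hx (hσ g)

namespace IsPureCubic

variable {k L : Type*} [Field k] [NumberField k] [IsCyclotomicExtension {3} ℚ k] [Field L]
  [NumberField L] [Algebra k L] [IsGalois k L] {θ : 𝓞 L} {ℓ p : ℕ}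

theorem exists_mul_eq_span_singleton (h : IsPureCubic k θ ℓ p) {J : Ideal (𝓞 L)} (hJ_ne : J ≠ ⊥)
    (hJ : ∀ g : Gal(L/k), g • J = J) :
    ∃ i ≤ 2, ∃ j ≤ 2, ∃ a : 𝓞 k, a ≠ 0 ∧ J * (ramifiedIdeal θ ℓ ^ i * ramifiedIdeal θ p ^ j) =
      Ideal.span {algebraMap (𝓞 k) (𝓞 L) a} := by
  have := IsCyclotomicExtension.Rat.three_pid k
  have isPrime_of {ℓ p : ℕ} (h : IsPureCubic k θ ℓ p) : Prime (ramifiedIdeal θ ℓ) :=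
    Ideal.prime_of_isPrime h.ramifiedIdeal_ne_bot h.isMaximal_ramifiedIdeal.isPrime
  obtain ⟨a, M, ha, hM, hJM⟩ := exists_mul_eq_span_singleton_of_smul_eq hJ_ne hJ
  obtain ⟨i, hi, j, hj, rfl⟩ := exists_pow_mul_pow_eq_of_dvd (isPrime_of h) (isPrime_of h.symm)
    (hM.trans h.differentIdeal_dvd)
  exact ⟨i, hi, j, hj, a, ha, hJM⟩

end IsPureCubic

theorem exists_unit_forall_ne_torsion_mul_pow {K : Type*} [Field K] [NumberField K]
    (hrank : Units.rank K ≠ 0) {n : ℕ} (hn : n ≠ 1) :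
    ∃ u : (𝓞 K)ˣ, ∀ t ∈ Units.torsion K, ∀ v, u ≠ t * v ^ n := by
  obtain ⟨i⟩ : Nonempty (Fin (Units.rank K)) := Fin.pos_iff_nonempty.mp (Nat.pos_of_ne_zero hrank)
  refine ⟨Units.fundSystem K i, fun t ht v hu ↦ hn ?_⟩
  obtain ⟨⟨ζ, f⟩, hv, -⟩ := Units.exist_unique_eq_mul_prod K v
  have hprod : Units.fundSystem K i = (t * ζ ^ n) * ∏ j, Units.fundSystem K j ^ (f j * n) := by
    rw [hu, hv]
    simp only [mul_pow, ← Finset.prod_pow, zpow_mul, zpow_natCast, mul_assoc]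
  have hsingle : Units.fundSystem K i =
      1 * ∏ j, Units.fundSystem K j ^ (Pi.single i 1 : Fin (Units.rank K) → ℤ) j := by
    simp [Pi.single_apply, Finset.prod_ite_eq']
  have hexponents := (Units.fun_eq_repr K (mul_mem ht (pow_mem ζ.2 n)) hprod).trans
    (Units.fun_eq_repr K (one_mem _) hsingle).symm
  have hexponent : f i * n = 1 := by simpa using congrFun hexponents i
  exact_mod_cast Int.eq_one_of_mul_eq_one_left (Int.natCast_nonneg n) hexponent

theorem rank_ne_zero_of_two_lt_finrank {K : Type*} [Field K] [NumberField K]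
    (hK : 2 < finrank ℚ K) : Units.rank K ≠ 0 := by
  have h₁ := InfinitePlace.card_add_two_mul_card_eq_rank K
  have h₂ := InfinitePlace.card_eq_nrRealPlaces_add_nrComplexPlaces K
  have h₃ : Units.rank K = Fintype.card (InfinitePlace K) - 1 := rfl
  omega

section Units

variable {k L : Type*} [Field k] [NumberField k] [Field L] [NumberField L] [Algebra k L]
  [IsGalois k L]

theorem intNorm_algebraMap (x : 𝓞 k) :
    Algebra.intNorm (𝓞 k) (𝓞 L) (algebraMap (𝓞 k) (𝓞 L) x) = x ^ finrank k L := by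
  apply FaithfulSMul.algebraMap_injective (𝓞 k) (𝓞 L)
  simp only [algebraMap_intNorm_eq_prod, smul_algebraMap, Finset.prod_const, Finset.card_univ,
    ← Nat.card_eq_fintype_card, IsGalois.card_aut_eq_finrank, map_pow]

theorem algebraMap_intNorm_eq_prod_range {σ : Gal(L/k)} (hσ : ∀ g, g ∈ Subgroup.zpowers σ)
    (x : 𝓞 L) : algebraMap (𝓞 k) (𝓞 L) (Algebra.intNorm (𝓞 k) (𝓞 L) x) =
      ∏ i ∈ Finset.range (finrank k L), σ ^ i • x := by
  classical
  rw [algebraMap_intNorm_eq_prod, ← IsCyclic.image_range_orderOf hσ, Finset.prod_image,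
    orderOf_eq_card_of_forall_mem_zpowers hσ, IsGalois.card_aut_eq_finrank]
  exact fun i hi j hj ↦ pow_injOn_Iio_orderOf (by simpa using hi) (by simpa using hj)

end Units

theorem smul_span_singleton_eq_self_of_unit_mul_smul_eq {k L : Type*} [Field k]
    [Field L] [Algebra k L] {σ : Gal(L/k)} (hσ : ∀ g, g ∈ Subgroup.zpowers σ)
    {u : (𝓞 L)ˣ} {y : 𝓞 L} (hy : u * σ • y = y)
    (g : Gal(L/k)) : g • Ideal.span {y} = Ideal.span {y} := by
  refine smul_eq_self_of_forall_mem_zpowers hσ ?_ g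
  rw [Ideal.smul_closure, Set.smul_set_singleton, Ideal.span_singleton_eq_span_singleton]
  exact ⟨u, by rw [mul_comm, hy]⟩

theorem eq_one_of_pow_eq_pow_of_pow_three_eq_one {G : Type*} [Group G] {c : G} (hc : c ^ 3 = 1)
    {i j : ℕ} (hi : i ≤ 2) (hj : j ≤ 2) (hij : i ≠ j) (h : c ^ i = c ^ j) : c = 1 := by
  by_contra hc1
  have horder : orderOf c = 3 := orderOf_eq_prime hc hc1
  exact hij (pow_injOn_Iio_orderOf (by simpa [horder] using hi.trans_lt (by norm_num))
    (by simpa [horder] using hj.trans_lt (by norm_num)) h)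

namespace IsPureCubic

variable {k L : Type*} [Field k] [Field L] [NumberField L] [Algebra k L] {θ : 𝓞 L} {ℓ p : ℕ}

theorem isPrincipal_ramifiedIdeal_of_pow_mul_pow (h : IsPureCubic k θ ℓ p) {i j : ℕ} (hi : i ≤ 2)
    (hj : j ≤ 2) (hij : i ≠ j)
    (hprinc : Submodule.IsPrincipal (ramifiedIdeal θ ℓ ^ i * ramifiedIdeal θ p ^ j)) :
    Submodule.IsPrincipal (ramifiedIdeal θ ℓ) := by
  have hP := mem_nonZeroDivisors_of_ne_zero h.ramifiedIdeal_ne_bot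
  have hQ := mem_nonZeroDivisors_of_ne_zero h.symm.ramifiedIdeal_ne_bot
  set P : nonZeroDivisors (Ideal (𝓞 L)) := ⟨_, hP⟩
  set Q : nonZeroDivisors (Ideal (𝓞 L)) := ⟨_, hQ⟩
  have mk0_eq_one {I : nonZeroDivisors (Ideal (𝓞 L))} :
      ClassGroup.mk0 I = 1 ↔ Submodule.IsPrincipal (I : Ideal (𝓞 L)) :=
    ClassGroup.mk0_eq_one_iff I.2
  have hP3 : ClassGroup.mk0 P ^ 3 = 1 := by
    rw [← map_pow, mk0_eq_one]
    exact ⟨_, h.ramifiedIdeal_pow_three⟩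
  have hPQ : ClassGroup.mk0 P * ClassGroup.mk0 Q = 1 := by
    rw [← map_mul, mk0_eq_one]
    exact ⟨_, h.ramifiedIdeal_mul_ramifiedIdeal⟩
  have hij1 : ClassGroup.mk0 P ^ i * ClassGroup.mk0 Q ^ j = 1 := by
    rw [← map_pow, ← map_pow, ← map_mul, mk0_eq_one]
    exact hprinc
  rw [eq_inv_of_mul_eq_one_right hPQ, inv_pow, mul_inv_eq_one] at hij1
  exact mk0_eq_one.mp (eq_one_of_pow_eq_pow_of_pow_three_eq_one hP3 hi hj hij hij1)

end IsPureCubic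

theorem isPrincipal_of_span_singleton_mul_eq_span_singleton {R : Type*} [CommRing R] [IsDomain R]
    {I : Ideal R} {y a : R} (hy : y ≠ 0) (hI : Ideal.span {y} * I = Ideal.span {a}) :
    Submodule.IsPrincipal I := by
  obtain ⟨c, rfl⟩ : y ∣ a :=
    Ideal.span_singleton_le_span_singleton.mp (hI ▸ Ideal.mul_le_left)
  rw [← Ideal.span_singleton_mul_span_singleton, Ideal.span_singleton_mul_right_inj hy] at hI
  exact ⟨c, hI⟩

theorem exists_eq_mul_pow_three_of_forall_mul_eq_mul_map {G : Type*} [CommGroup G] {s : G →* G}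
    {T : Subgroup G} (hT : ∀ t ∈ T, s t ∈ T) (hnorm : ∀ x, x * s x * s (s x) ∈ T)
    (hG : ∀ u, ∃ t ∈ T, ∃ v, u * v = t * s v) (u : G) : ∃ t ∈ T, ∃ v, u = t * v ^ 3 := by
  obtain ⟨t, ht, v, huv⟩ := hG u
  obtain ⟨t', ht', x, hvx⟩ := hG v
  refine ⟨t * s t' * t'⁻¹ * (x * s x * s (s x)),
    mul_mem (mul_mem (mul_mem ht (hT t' ht')) (inv_mem ht')) (hnorm x), (s x)⁻¹, ?_⟩
  rw [eq_mul_inv_of_mul_eq huv, eq_mul_inv_of_mul_eq hvx, map_mul, map_mul, map_inv]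
  exact Additive.ofMul.injective (by simp only [ofMul_mul, ofMul_inv, ofMul_pow]; abel)

namespace IsPureCubic

variable {k L : Type*} [Field k] [NumberField k] [IsCyclotomicExtension {3} ℚ k] [Field L]
  [NumberField L] [Algebra k L] {θ : 𝓞 L} {ℓ p : ℕ}

section Units

variable [IsGalois k L] {σ : Gal(L/k)}

theorem exists_torsion_mul_smul_of_intNorm_eq_one (h : IsPureCubic k θ ℓ p)
    (hP : ¬ Submodule.IsPrincipal (ramifiedIdeal θ ℓ)) (hσ : ∀ g, g ∈ Subgroup.zpowers σ)
    {u : (𝓞 L)ˣ} (hu : Algebra.intNorm (𝓞 k) (𝓞 L) u = 1) :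
    ∃ t ∈ Units.torsion L, ∃ v : (𝓞 L)ˣ,
      u * v = t * Units.map (MulDistribMulAction.toMonoidHom (𝓞 L) σ) v := by
  obtain ⟨y, hy, huy⟩ := exists_mul_smul_eq_mul_of_intNorm_eq hσ one_ne_zero
    (hu.trans (map_one _).symm)
  rw [one_mul] at huy
  obtain ⟨i, hi, j, hj, a, -, hya⟩ := h.exists_mul_eq_span_singleton
    (mt Ideal.span_singleton_eq_bot.mp hy)
    (smul_span_singleton_eq_self_of_unit_mul_smul_eq hσ huy)
  obtain rfl : i = j := by
    by_contra hij
    exact hP (h.isPrincipal_ramifiedIdeal_of_pow_mul_pow hi hj hij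
      (isPrincipal_of_span_singleton_mul_eq_span_singleton hy hya))
  rw [← mul_pow, h.ramifiedIdeal_mul_ramifiedIdeal, Ideal.span_singleton_pow,
    Ideal.span_singleton_mul_span_singleton, Ideal.span_singleton_eq_span_singleton] at hya
  obtain ⟨v, hv⟩ := hya
  obtain ⟨η, hη, hσθ⟩ := h.exists_smul_eq_mul σ
  have hηtors : η ∈ Units.torsion L :=
    (CommGroup.mem_torsion _).mpr (isOfFinOrder_iff_pow_eq_one.mpr ⟨3, by norm_num, hη⟩)
  have hσv : (σ • y * (η * θ) ^ i) * σ • (v : 𝓞 L) = y * θ ^ i * v := by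
    rw [← hσθ, ← smul_pow', ← smul_mul', ← smul_mul', hv, smul_algebraMap]
  have hne : σ • y * θ ^ i ≠ 0 := mul_ne_zero ((smul_ne_zero_iff_ne σ).mpr hy)
    (pow_ne_zero _ h.ne_zero)
  refine ⟨η ^ i, pow_mem hηtors i, v, Units.ext (mul_left_cancel₀ hne ?_)⟩
  push_cast
  simp only [Units.coe_map, MulDistribMulAction.toMonoidHom_apply]
  linear_combination θ ^ i * v * huy - hσv

theorem exists_torsion_mul_smul (h : IsPureCubic k θ ℓ p)
    (hP : ¬ Submodule.IsPrincipal (ramifiedIdeal θ ℓ)) (hσ : ∀ g, g ∈ Subgroup.zpowers σ)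
    (u : (𝓞 L)ˣ) : ∃ t ∈ Units.torsion L, ∃ v : (𝓞 L)ˣ,
      u * v = t * Units.map (MulDistribMulAction.toMonoidHom (𝓞 L) σ) v := by
  set n : (𝓞 k)ˣ := Units.map (Algebra.intNorm (𝓞 k) (𝓞 L)) u with hn
  have hn2 : n ^ 2 = 1 := h.sq_eq_one_of_intNorm_eq_mul_intNorm one_ne_zero (b := u)
    (by rw [map_one, mul_one]; rfl)
  set m : (𝓞 L)ˣ := Units.map (algebraMap (𝓞 k) (𝓞 L)) n
  have hm2 : m ^ 2 = 1 := by rw [← map_pow, hn2, map_one]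
  have hm : m ∈ Units.torsion L :=
    (CommGroup.mem_torsion _).mpr (isOfFinOrder_iff_pow_eq_one.mpr ⟨2, by norm_num, hm2⟩)
  have hnorm : Algebra.intNorm (𝓞 k) (𝓞 L) (m * u : (𝓞 L)ˣ) = 1 := by
    have hn4 : n ^ 3 * n = 1 := by rw [← pow_succ, pow_mul n 2 2, hn2, one_pow]
    rw [Units.val_mul, map_mul, ← Units.val_one, ← hn4, ← h.finrank_eq]
    simp only [m, Units.coe_map, MonoidHom.coe_coe, intNorm_algebraMap, Units.val_mul,
      Units.val_pow_eq_pow_val, hn]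
  obtain ⟨t, ht, v, hv⟩ := h.exists_torsion_mul_smul_of_intNorm_eq_one hP hσ hnorm
  exact ⟨m⁻¹ * t, mul_mem (inv_mem hm) ht, v, by rw [mul_assoc, ← hv]; group⟩

theorem mul_smul_mul_smul_smul_mem_torsion (h : IsPureCubic k θ ℓ p)
    (hσ : ∀ g, g ∈ Subgroup.zpowers σ) (x : (𝓞 L)ˣ) :
    letI s := Units.map (MulDistribMulAction.toMonoidHom (𝓞 L) σ)
    x * s x * s (s x) ∈ Units.torsion L := by
  rw [Units.torsion, CommGroup.mem_torsion, isOfFinOrder_iff_pow_eq_one]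
  refine ⟨6, by norm_num, ?_⟩
  have hnorm : x * Units.map (MulDistribMulAction.toMonoidHom (𝓞 L) σ) x *
      Units.map (MulDistribMulAction.toMonoidHom (𝓞 L) σ)
        (Units.map (MulDistribMulAction.toMonoidHom (𝓞 L) σ) x) =
      Units.map (algebraMap (𝓞 k) (𝓞 L)) (Units.map (Algebra.intNorm (𝓞 k) (𝓞 L)) x) := by
    ext
    simp [algebraMap_intNorm_eq_prod_range hσ, h.finrank_eq, Finset.prod_range_succ,
      pow_two, mul_smul]
  rw [hnorm, ← map_pow, units_pow_six_eq_one, map_one]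

end Units

theorem isPrincipal_ramifiedIdeal (h : IsPureCubic k θ ℓ p) :
    Submodule.IsPrincipal (ramifiedIdeal θ ℓ) := by
  by_contra hP
  obtain ⟨_, hcyclic⟩ := h.isGalois_and_isCyclic
  obtain ⟨σ, hσ⟩ := hcyclic.exists_generator
  obtain ⟨u, hu⟩ := exists_unit_forall_ne_torsion_mul_pow (K := L)
    (rank_ne_zero_of_two_lt_finrank (by rw [h.finrank_rat]; norm_num)) (n := 3) (by norm_num)
  obtain ⟨t, ht, v, huv⟩ := exists_eq_mul_pow_three_of_forall_mul_eq_mul_map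
    (fun t ht ↦ MonoidHom.isOfFinOrder (Units.map _) ht) (h.mul_smul_mul_smul_smul_mem_torsion hσ)
    (h.exists_torsion_mul_smul hP hσ) u
  exact hu t ht v huv

end IsPureCubic

/-- The homomorphism of class groups that sends the class of `I` to that of `I.map f`. This is
`ClassGroup.extendedHom` with the algebra structure replaced by an injective ring homomorphism, so
that it applies to the automorphisms of a single ring. -/
noncomputable def classGroupMap {R S : Type*} [CommRing R] [IsDomain R] [CommRing S] [IsDomain S]
    (f : R →+* S) (hf : Function.Injective f) : ClassGroup R →* ClassGroup S :=
  letI := f.toAlgebra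
  have : FaithfulSMul R S := (faithfulSMul_iff_algebraMap_injective R S).mpr hf
  ClassGroup.extendedHom R S

theorem classGroupMap_mk0 {R S : Type*} [CommRing R] [IsDedekindDomain R] [CommRing S]
    [IsDedekindDomain S] {f : R →+* S} (hf : Function.Injective f)
    {I : nonZeroDivisors (Ideal R)} {J : nonZeroDivisors (Ideal S)}
    (hJ : (J : Ideal S) = (I : Ideal R).map f) :
    classGroupMap f hf (ClassGroup.mk0 I) = ClassGroup.mk0 J := by
  let := f.toAlgebra
  have : FaithfulSMul R S := (faithfulSMul_iff_algebraMap_injective R S).mpr hf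
  exact (ClassGroup.extendedHom_mk0 R S I).trans (congrArg ClassGroup.mk0 (Subtype.ext hJ.symm))

/-- On the `3`-torsion of `C`, the operator `s - 1` is both injective and nilpotent. -/
theorem eq_one_of_pow_three_eq_one_of_fixedPoints_trivial {C : Type*} [CommGroup C] {s : C →* C}
    (hs : ∀ c, s (s (s c)) = c) (hfixed : ∀ c, s c = c → c = 1) {c : C} (hc : c ^ 3 = 1) :
    c = 1 := by
  have hinj (c : C) (h : s c * c⁻¹ = 1) : c = 1 := hfixed c (mul_inv_eq_one.mp h)
  have hcube {c : C} (h : c ^ 3 = 1) : (s c) ^ 3 = 1 := by rw [← map_pow, h, map_one]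
  apply hinj
  apply hinj
  apply hinj
  calc _ = ((s (s c)) ^ 3)⁻¹ * (s c) ^ 3 := by
        simp only [map_mul, map_inv, hs, pow_succ, pow_zero, one_mul, mul_inv_rev, inv_inv]
        exact Additive.ofMul.injective (by simp only [ofMul_mul, ofMul_inv]; abel)
    _ = 1 := by rw [hcube (hcube hc), hcube hc, inv_one, one_mul]

namespace IsPureCubic

variable {k L : Type*} [Field k] [NumberField k] [IsCyclotomicExtension {3} ℚ k] [Field L]
  [NumberField L] [Algebra k L] {θ : 𝓞 L} {ℓ p : ℕ}

section Ambiguous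

variable [IsGalois k L] {σ : Gal(L/k)}

theorem isPrincipal_of_smul_eq_self (h : IsPureCubic k θ ℓ p) {J : Ideal (𝓞 L)} (hJ_ne : J ≠ ⊥)
    (hJ : ∀ g : Gal(L/k), g • J = J) : Submodule.IsPrincipal J := by
  obtain ⟨i, -, j, -, a, -, hJa⟩ := h.exists_mul_eq_span_singleton hJ_ne hJ
  obtain ⟨π, hπ : ramifiedIdeal θ ℓ = Ideal.span {π}⟩ := h.isPrincipal_ramifiedIdeal
  obtain ⟨ρ, hρ : ramifiedIdeal θ p = Ideal.span {ρ}⟩ := h.symm.isPrincipal_ramifiedIdeal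
  have hπ_ne : π ≠ 0 := mt Ideal.span_singleton_eq_bot.mpr (hπ ▸ h.ramifiedIdeal_ne_bot)
  have hρ_ne : ρ ≠ 0 := mt Ideal.span_singleton_eq_bot.mpr (hρ ▸ h.symm.ramifiedIdeal_ne_bot)
  rw [hπ, hρ, Ideal.span_singleton_pow, Ideal.span_singleton_pow,
    Ideal.span_singleton_mul_span_singleton, mul_comm] at hJa
  exact isPrincipal_of_span_singleton_mul_eq_span_singleton
    (mul_ne_zero (pow_ne_zero i hπ_ne) (pow_ne_zero j hρ_ne)) hJa

theorem exists_mul_smul_eq_mul_of_span_singleton_mul_smul_eq (h : IsPureCubic k θ ℓ p)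
    (hσ : ∀ g, g ∈ Subgroup.zpowers σ) {I : Ideal (𝓞 L)} (hI : I ≠ ⊥) {a b : 𝓞 L} (ha : a ≠ 0)
    (hab : Ideal.span {a} * σ • I = Ideal.span {b} * I) :
    ∃ u : (𝓞 L)ˣ, ∃ y ≠ 0, u * b * σ • y = a * y := by
  obtain ⟨u, hu⟩ : Associated (Algebra.intNorm (𝓞 k) (𝓞 L) a)
      (Algebra.intNorm (𝓞 k) (𝓞 L) b) := by
    have hrel := congrArg (Ideal.relNorm (𝓞 k)) hab
    simp only [map_mul, Ideal.relNorm_smul, Ideal.relNorm_singleton] at hrel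
    exact Ideal.span_singleton_eq_span_singleton.mp
      (mul_right_cancel₀ (mt Ideal.relNorm_eq_bot_iff.mp hI) hrel)
  rw [mul_comm] at hu
  have hu4 : u ^ 3 * u = 1 := by
    rw [← pow_succ, pow_mul u 2 2, h.sq_eq_one_of_intNorm_eq_mul_intNorm ha hu.symm, one_pow]
  have hnorm : Algebra.intNorm (𝓞 k) (𝓞 L) (algebraMap (𝓞 k) (𝓞 L) u * b) =
      Algebra.intNorm (𝓞 k) (𝓞 L) a := by
    rw [map_mul, intNorm_algebraMap, h.finrank_eq, ← hu, ← mul_assoc, ← Units.val_pow_eq_pow_val,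
      ← Units.val_mul, hu4, Units.val_one, one_mul]
  obtain ⟨y, hy, hay⟩ := exists_mul_smul_eq_mul_of_intNorm_eq hσ ha hnorm
  exact ⟨Units.map (algebraMap (𝓞 k) (𝓞 L)).toMonoidHom u, y, hy, hay⟩

theorem isPrincipal_of_span_singleton_mul_smul_eq (h : IsPureCubic k θ ℓ p)
    (hσ : ∀ g, g ∈ Subgroup.zpowers σ) {I : Ideal (𝓞 L)} (hI : I ≠ ⊥) {a b : 𝓞 L} (ha : a ≠ 0)
    (hab : Ideal.span {a} * σ • I = Ideal.span {b} * I) : Submodule.IsPrincipal I := by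
  obtain ⟨u, y, hy, huy⟩ := h.exists_mul_smul_eq_mul_of_span_singleton_mul_smul_eq hσ hI ha hab
  have hspan : Ideal.span {b} * σ • Ideal.span {y} = Ideal.span {a} * Ideal.span {y} := by
    rw [Ideal.smul_closure, Set.smul_set_singleton, Ideal.span_singleton_mul_span_singleton,
      Ideal.span_singleton_mul_span_singleton, ← huy, mul_assoc,
      Ideal.span_singleton_mul_left_unit u.isUnit]
  have hfixed : σ • (Ideal.span {y} * I) = Ideal.span {y} * I := by
    apply mul_left_cancel₀ (mt Ideal.span_singleton_eq_bot.mp ha)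
    calc Ideal.span {a} * σ • (Ideal.span {y} * I)
        = σ • Ideal.span {y} * (Ideal.span {a} * σ • I) := by rw [smul_mul']; ring
      _ = Ideal.span {b} * σ • Ideal.span {y} * I := by rw [hab]; ring
      _ = Ideal.span {a} * (Ideal.span {y} * I) := by rw [hspan, mul_assoc]
  obtain ⟨c, hc : Ideal.span {y} * I = Ideal.span {c}⟩ := h.isPrincipal_of_smul_eq_self
    (mul_ne_zero (mt Ideal.span_singleton_eq_bot.mp hy) hI)
    (smul_eq_self_of_forall_mem_zpowers hσ hfixed)
  exact isPrincipal_of_span_singleton_mul_eq_span_singleton hy hc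

end Ambiguous

theorem not_three_dvd_classNumber (h : IsPureCubic k θ ℓ p) : ¬ 3 ∣ classNumber L := by
  intro hdvd
  obtain ⟨_, hcyclic⟩ := h.isGalois_and_isCyclic
  obtain ⟨σ, hσ⟩ := hcyclic.exists_generator
  let smul (I : nonZeroDivisors (Ideal (𝓞 L))) : nonZeroDivisors (Ideal (𝓞 L)) :=
    ⟨σ • (I : Ideal (𝓞 L)), mem_nonZeroDivisors_of_ne_zero
      ((smul_ne_zero_iff_ne σ).mpr (nonZeroDivisors.ne_zero I.2))⟩
  let s := classGroupMap (MulSemiringAction.toRingHom Gal(L/k) (𝓞 L) σ) (MulAction.injective σ)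
  have hs_mk0 (I) : s (ClassGroup.mk0 I) = ClassGroup.mk0 (smul I) := classGroupMap_mk0 _ rfl
  have hσ3 : σ * (σ * σ) = 1 := by
    rw [← _root_.pow_three, ← h.finrank_eq, ← IsGalois.card_aut_eq_finrank, pow_card_eq_one']
  have hs (c) : s (s (s c)) = c := by
    obtain ⟨I, rfl⟩ := ClassGroup.mk0_surjective c
    simp only [hs_mk0, smul, smul_smul, hσ3, one_smul]
  have hfixed (c) (hc : s c = c) : c = 1 := by
    obtain ⟨I, rfl⟩ := ClassGroup.mk0_surjective c
    obtain ⟨a, b, ha, -, hab⟩ := ClassGroup.mk0_eq_mk0_iff.mp ((hs_mk0 I).symm.trans hc)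
    exact (ClassGroup.mk0_eq_one_iff I.2).mpr
      (h.isPrincipal_of_span_singleton_mul_smul_eq hσ (nonZeroDivisors.ne_zero I.2) ha hab)
  have : Fact (Nat.Prime 3) := ⟨Nat.prime_three⟩
  obtain ⟨c, hc⟩ := exists_prime_orderOf_dvd_card (G := ClassGroup (𝓞 L)) 3 hdvd
  have hc1 := eq_one_of_pow_three_eq_one_of_fixedPoints_trivial hs hfixed
    (orderOf_dvd_iff_pow_eq_one.mp hc.dvd)
  rw [hc1, orderOf_one] at hc
  norm_num at hc

end IsPureCubic

theorem exists_dvd_pow_three_sub {r : ℕ} (hr : r.Prime) (hr3 : r % 3 = 2) (n : ℤ) :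
    ∃ m : ℤ, (r : ℤ) ∣ m ^ 3 - n := by
  have := Fact.mk hr
  have hexp : (2 * (r / 3) + 1) * 3 = r + (r - 1) := by omega
  refine ⟨n ^ (2 * (r / 3) + 1), (ZMod.intCast_eq_intCast_iff_dvd_sub _ _ r).mp ?_⟩
  rw [← pow_mul, hexp, Int.cast_pow, pow_add, ZMod.pow_card, ← pow_succ',
    Nat.sub_add_cancel hr.one_le, ZMod.pow_card]

theorem exists_dvd_pow_three_sub_and_not_dvd {r n m : ℤ} (hr : Prime r) (hn : ¬ r ^ 2 ∣ n)
    (hm : r ∣ m ^ 3 - n) : ∃ m : ℤ, r ∣ m ^ 3 - n ∧ ¬ r ^ 3 ∣ m ^ 3 - n := by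
  by_contra! h
  have hrm : ¬ r ∣ m := fun hrm ↦ hn <| by
    rw [← sub_sub_cancel (m ^ 3) n]
    exact (pow_dvd_pow r (by decide)).trans ((pow_dvd_pow_of_dvd hrm 3).sub (h m hm))
  have hexpand : (m + r) ^ 3 - n = m ^ 3 - n + r * (m * (m + r) * 3 + r ^ 2) := by ring
  have hdvd : r ^ 2 ∣ m * (m + r) * 3 + r ^ 2 := by
    have hm' := h (m + r) (hexpand ▸ hm.add (dvd_mul_right r _))
    rw [hexpand, dvd_add_right (h m hm), pow_succ'] at hm'
    exact Int.dvd_of_mul_dvd_mul_left hr.ne_zero hm'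
  have hcop : IsCoprime (r ^ 2) (m * (m + r)) := by
    refine (IsCoprime.mul_right ?_ ?_).pow_left <;> rw [hr.coprime_iff_not_dvd]
    · exact hrm
    · rwa [dvd_add_self_right]
  have h3 : r * r ∣ 3 := sq r ▸ hcop.dvd_of_dvd_mul_left ((dvd_add_left dvd_rfl).mp hdvd)
  exact hr.not_isUnit (Int.prime_three.irreducible.squarefree r h3)

theorem norm_algebraMap_sub_of_pow_finrank_eq {k L : Type*} [Field k] [Field L] [Algebra k L]
    (hp : (finrank k L).Prime) {x : L} (hx : x ∉ (algebraMap k L).range) {n : k}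
    (hxn : x ^ finrank k L = algebraMap k L n) (m : k) :
    Algebra.norm k (algebraMap k L m - x) = m ^ finrank k L - n := by
  have := Module.finite_of_finrank_pos hp.pos
  let B := PowerBasis.ofAdjoinEqTop (.of_finite k x)
    (adjoin_singleton_eq_top_of_finrank_prime hp hx)
  have hgen : B.gen = x := PowerBasis.ofAdjoinEqTop_gen _ _
  have hminpoly : minpoly k B.gen = X ^ finrank k L - C n := by
    refine (eq_of_monic_of_dvd_of_natDegree_le (minpoly.monic (.of_finite k _))
      (monic_X_pow_sub_C n hp.ne_zero) (minpoly.dvd _ _ ?_) ?_).symm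
    · simp [hgen, hxn]
    · rw [natDegree_X_pow_sub_C, B.natDegree_minpoly, B.finrank]
  calc Algebra.norm k (algebraMap k L m - x)
      = (Matrix.scalar _ m - Algebra.leftMulMatrix B.basis B.gen).det := by
        rw [Algebra.norm_eq_matrix_det B.basis, map_sub, AlgHom.commutes, hgen]
        rfl
    _ = m ^ finrank k L - n := by
        rw [← Matrix.eval_charpoly, charpoly_leftMulMatrix, hminpoly]
        simp

theorem exists_abs_norm_eq_absNorm_pow {K : Type*} (L : Type*) [Field K] [NumberField K] [Field L]
    [NumberField L] [Algebra K L] {I : Ideal (𝓞 K)} (hI : I ≠ ⊥) :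
    ∃ x : K, |Algebra.norm ℚ x| = (Ideal.absNorm I : ℚ) ^ (finrank K L * classNumber L) := by
  let J : nonZeroDivisors (Ideal (𝓞 L)) := ⟨I.map (algebraMap (𝓞 K) (𝓞 L)),
    mem_nonZeroDivisors_of_ne_zero (by
      rwa [Ne, Ideal.zero_eq_bot, Ideal.map_eq_bot_iff_of_injective
        (FaithfulSMul.algebraMap_injective _ _)])⟩
  have hJ : ClassGroup.mk0 (J ^ classNumber L) = 1 := by
    rw [map_pow]
    exact pow_card_eq_one
  obtain ⟨a, ha⟩ := (ClassGroup.mk0_eq_one_iff (J ^ classNumber L).2).mp hJ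
  refine ⟨Algebra.norm K (algebraMap (𝓞 L) L a), ?_⟩
  rw [Algebra.norm_norm, ← Algebra.coe_norm_int, ← Int.cast_abs, Int.abs_eq_natAbs,
    ← Ideal.absNorm_span_singleton, ← Ideal.submodule_span_eq, ← ha, SubmonoidClass.coe_pow,
    map_pow, Ideal.absNorm_algebraMap, ← IsFractionRing.finrank_eq (𝓞 K) K (𝓞 L) L, ← pow_mul]
  norm_cast

theorem exists_norm_eq_of_abs_norm_eq_pow {K : Type*} [Field K] [NumberField K]
    (hK : Odd (finrank ℚ K)) {c : ℚ} (hc : c ≠ 0) {e : ℕ} (he : e.Coprime (finrank ℚ K)) {y : K}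
    (hy : |Algebra.norm ℚ y| = c ^ e) : ∃ x : K, Algebra.norm ℚ x = c := by
  obtain ⟨z, hz⟩ : ∃ z : K, Algebra.norm ℚ z = c ^ e := by
    obtain h | h := abs_choice (Algebra.norm ℚ y)
    · exact ⟨y, h ▸ hy⟩
    · refine ⟨algebraMap ℚ K (-1) * y, ?_⟩
      rw [map_mul, Algebra.norm_algebraMap, hK.neg_one_pow, neg_one_mul, ← h, hy]
  have hbezout := Nat.gcd_eq_gcd_ab e (finrank ℚ K)
  rw [he.gcd_eq_one, Nat.cast_one] at hbezout
  refine ⟨z ^ e.gcdA (finrank ℚ K) * algebraMap ℚ K (c ^ e.gcdB (finrank ℚ K)), ?_⟩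
  rw [map_mul, map_zpow' _ fun _ ↦ Algebra.norm_inv _, hz, Algebra.norm_algebraMap,
    ← zpow_natCast, ← zpow_natCast, ← zpow_mul, ← zpow_mul, ← zpow_add₀ hc,
    mul_comm (e.gcdB _), ← hbezout, zpow_one]

theorem exists_absNorm_eq_pow_of_dvd_norm {K : Type*} [Field K] [NumberField K] {r : ℕ}
    (hr : r.Prime) {x : 𝓞 K} (hdvd : (r : ℤ) ∣ Algebra.norm ℤ x) {d : ℕ}
    (hd : ¬ (r : ℤ) ^ d ∣ Algebra.norm ℤ x) :
    ∃ P : Ideal (𝓞 K), P ≠ ⊥ ∧ ∃ f, 0 < f ∧ f < d ∧ Ideal.absNorm P = r ^ f := by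
  obtain ⟨P, hP, hPr, hPx⟩ := Ideal.exists_isMaximal_dvd_of_dvd_absNorm' hr (Ideal.span {x}) (by
    rwa [Ideal.absNorm_span_singleton, ← Int.natCast_dvd])
  obtain ⟨s, f, hf, hsP, hs, hPf⟩ := Ideal.exists_prime_and_absNorm_eq_pow P
  have hs_mem : (s : ℤ) ∈ P.under ℤ := Ideal.mem_comap.mpr (by simpa using hsP)
  rw [hPr, Ideal.mem_span_singleton, Int.natCast_dvd_natCast, Nat.prime_dvd_prime_iff_eq hr hs]
    at hs_mem
  refine ⟨P, Ideal.IsMaximal.ne_bot_of_isIntegral_int P, f, hf, ?_, hs_mem ▸ hPf⟩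
  by_contra! hle
  apply hd
  rw [← Nat.cast_pow, Int.natCast_dvd, ← Ideal.absNorm_span_singleton, hs_mem]
  exact (pow_dvd_pow s hle).trans
    (hPf ▸ Ideal.absNorm_dvd_absNorm_of_le (Ideal.dvd_iff_le.mp hPx))

theorem exists_norm_eq_of_dvd_norm {K : Type*} (L : Type*) [Field K] [NumberField K] [Field L]
    [NumberField L] [Algebra K L] (hK : (finrank ℚ K).Prime) (hK_odd : Odd (finrank ℚ K))
    (hKL : ¬ finrank ℚ K ∣ finrank K L) (hL : ¬ finrank ℚ K ∣ classNumber L) {r : ℕ}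
    (hr : r.Prime) {x : 𝓞 K} (hdvd : (r : ℤ) ∣ Algebra.norm ℤ x)
    (hdvd' : ¬ (r : ℤ) ^ finrank ℚ K ∣ Algebra.norm ℤ x) :
    ∃ ε : K, Algebra.norm ℚ ε = r := by
  obtain ⟨P, hP, f, hf, hf_lt, hPf⟩ := exists_absNorm_eq_pow_of_dvd_norm hr hdvd hdvd'
  obtain ⟨y, hy⟩ := exists_abs_norm_eq_absNorm_pow L hP
  rw [hPf, Nat.cast_pow, ← pow_mul] at hy
  refine exists_norm_eq_of_abs_norm_eq_pow hK_odd (by exact_mod_cast hr.ne_zero) ?_ hy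
  exact .mul_left (Nat.coprime_of_lt_prime hf.ne' hf_lt hK).symm
    (.mul_left (hK.coprime_iff_not_dvd.mpr hKL).symm (hK.coprime_iff_not_dvd.mpr hL).symm)

theorem finrank_le_totient (n : ℕ) [NeZero n] (K L : Type*) [Field K] [Field L] [Algebra K L]
    [IsCyclotomicExtension {n} K L] : finrank K L ≤ n.totient := by
  let z := IsCyclotomicExtension.zeta n K L
  have hz : IsPrimitiveRoot z n := IsCyclotomicExtension.zeta_spec n K L
  rw [(hz.powerBasis K).finrank, IsPrimitiveRoot.powerBasis_dim, ← natDegree_cyclotomic n K]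
  refine natDegree_le_of_dvd (minpoly.dvd K z ?_) (cyclotomic_ne_zero n K)
  rw [aeval_def, eval₂_eq_eval_map, map_cyclotomic]
  exact hz.isRoot_cyclotomic (NeZero.pos n)

theorem exists_isPureCubic_of_pow_three_eq {K : Type*} [Field K] [NumberField K]
    (hK : finrank ℚ K = 3) {ℓ p : ℕ} (hℓ : ℓ.Prime) (hp : p.Prime)
    (h9 : ℓ % 9 = 2 ∧ p % 9 = 5 ∨ ℓ % 9 = 5 ∧ p % 9 = 2) {x : K} (hx : x ^ 3 = ℓ * p) :
    ∃ θ : 𝓞 K, IsPureCubic ℚ θ ℓ p := by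
  have hint : IsIntegral ℤ x := .of_pow three_pos
    (hx ▸ .mul (isIntegral_natCast ℓ) (isIntegral_natCast p))
  obtain ⟨θ, rfl⟩ := IsIntegralClosure.isIntegral_iff (A := 𝓞 K).mp hint
  exact ⟨θ, hK, RingOfIntegers.ext (by simpa using hx), hℓ, hp, h9⟩

namespace IsPureCubic

variable {K : Type*} [Field K] [NumberField K] {θ : 𝓞 K} {ℓ p : ℕ}

theorem algebraMap_of_isCyclotomicExtension (h : IsPureCubic ℚ θ ℓ p) (k L : Type*) [Field k]
    [NumberField k] [IsCyclotomicExtension {3} ℚ k] [Field L] [NumberField L] [Algebra k L]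
    [Algebra K L] [IsCyclotomicExtension {3} K L] :
    IsPureCubic k (algebraMap (𝓞 K) (𝓞 L) θ) ℓ p where
  finrank_eq := by
    have hkL := finrank_mul_finrank ℚ k L
    have hKL := finrank_mul_finrank ℚ K L
    have hle : finrank K L ≤ 2 := finrank_le_totient 3 K L
    have hpos : 0 < finrank K L := finrank_pos
    rw [finrank_rat_eq_two] at hkL
    rw [h.finrank_eq] at hKL
    omega
  pow_three := by rw [← map_pow, h.pow_three, map_mul, map_natCast, map_natCast]
  prime_left := h.prime_left
  prime_right := h.prime_right
  mod_nine := h.mod_nine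

theorem not_three_dvd_classNumber_cyclotomicField (h : IsPureCubic ℚ θ ℓ p) :
    ¬ 3 ∣ classNumber (CyclotomicField 3 K) := by
  have hz := IsCyclotomicExtension.zeta_spec 3 K (CyclotomicField 3 K)
  let k := IntermediateField.adjoin ℚ {IsCyclotomicExtension.zeta 3 K (CyclotomicField 3 K)}
  have : IsCyclotomicExtension {3} ℚ k := hz.intermediateField_adjoin_isCyclotomicExtension ℚ
  exact (h.algebraMap_of_isCyclotomicExtension k (CyclotomicField 3 K)).not_three_dvd_classNumber

theorem norm_intCast_sub (h : IsPureCubic ℚ θ ℓ p) (m : ℤ) :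
    Algebra.norm ℤ (m - θ) = m ^ 3 - ℓ * p := by
  have hθ := h.notMem_range_algebraMap (by rw [finrank_self]; decide)
  have hθ3 : algebraMap (𝓞 K) K θ ^ finrank ℚ K = algebraMap ℚ K (ℓ * p) := by
    rw [h.finrank_eq, ← map_pow, h.pow_three]
    simp
  have hnorm := norm_algebraMap_sub_of_pow_finrank_eq (h.finrank_eq ▸ Nat.prime_three) hθ hθ3 m
  rw [h.finrank_eq, map_intCast] at hnorm
  rw [← Int.cast_inj (α := ℚ), Algebra.coe_norm_int]
  exact_mod_cast hnorm

theorem exists_norm_eq_of_dvd_pow_three_sub (h : IsPureCubic ℚ θ ℓ p) {r : ℕ} (hr : r.Prime)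
    {m : ℤ} (hm : (r : ℤ) ∣ m ^ 3 - ℓ * p) : ∃ ε : K, Algebra.norm ℚ ε = r := by
  have hr' := Nat.prime_iff_prime_int.mp hr
  obtain ⟨m, hdvd, hdvd'⟩ := exists_dvd_pow_three_sub_and_not_dvd hr' (h.not_sq_dvd_mul hr') hm
  rw [← h.norm_intCast_sub] at hdvd hdvd'
  rw [← h.finrank_eq] at hdvd'
  have hle : finrank K (CyclotomicField 3 K) ≤ 2 := finrank_le_totient 3 K _
  have hpos : 0 < finrank K (CyclotomicField 3 K) := finrank_pos
  refine exists_norm_eq_of_dvd_norm (CyclotomicField 3 K) ?_ ?_ ?_ ?_ hr hdvd hdvd' <;>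
    rw [h.finrank_eq]
  · exact Nat.prime_three
  · decide
  · exact Nat.not_dvd_of_pos_of_lt hpos (by omega)
  · exact h.not_three_dvd_classNumber_cyclotomicField

end IsPureCubic

theorem stmt_16_general (ℓ p q : ℕ) (hℓ : ℓ.Prime) (hp : p.Prime) (hq : q.Prime)
    (h9 : (ℓ % 9 = 2 ∧ p % 9 = 5) ∨ (ℓ % 9 = 5 ∧ p % 9 = 2)) {m : ℤ}
    (hm : (q : ℤ) ∣ m ^ 3 - ℓ * p)
    (K : Type*) [Field K] [NumberField K] (β : K)
    (hβ : β ^ 3 = (ℓ : K) ^ 2 / (p : K))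
    (hrank : finrank ℚ K = 3) :
    ∃ ε : K, Algebra.norm ℚ ε = (p : ℚ) * q := by
  have hℓ0 : (ℓ : K) ≠ 0 := by exact_mod_cast hℓ.ne_zero
  have hp0 : (p : K) ≠ 0 := by exact_mod_cast hp.ne_zero
  have hx : (p * β ^ 2 / ℓ) ^ 3 = (ℓ : K) * p := by
    rw [div_pow, mul_pow, ← pow_mul, mul_comm 2 3, pow_mul, hβ]
    field_simp
  obtain ⟨θ, hθ⟩ := exists_isPureCubic_of_pow_three_eq hrank hℓ hp h9 hx
  obtain ⟨x, hx⟩ := hθ.exists_norm_eq_of_dvd_pow_three_sub hp (m := 0) (by simp)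
  obtain ⟨y, hy⟩ := hθ.exists_norm_eq_of_dvd_pow_three_sub hq hm
  exact ⟨x * y, by rw [map_mul, hx, hy]⟩

/-- Let `ℓ, p, q` be distinct primes with `q ≡ 8 (mod 9)` and
`{ℓ mod 9, p mod 9} = {2, 5}`, and let `K = ℚ(β)` be the cubic field with
`β³ = ℓ²/p`. Then some `ε ∈ K` has `Norm_{K/ℚ}(ε) = pq`. -/
theorem stmt_16 (ℓ p q : ℕ) (hℓ : ℓ.Prime) (hp : p.Prime) (hq : q.Prime)
    (hℓp : ℓ ≠ p) (hℓq : ℓ ≠ q) (hpq : p ≠ q) (hq9 : q % 9 = 8)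
    (h9 : (ℓ % 9 = 2 ∧ p % 9 = 5) ∨ (ℓ % 9 = 5 ∧ p % 9 = 2))
    (K : Type*) [Field K] [NumberField K] (β : K)
    (hβ : β ^ 3 = (ℓ : K) ^ 2 / (p : K))
    (hrank : Module.finrank ℚ K = 3) :
    ∃ ε : K, Algebra.norm ℚ ε = (p : ℚ) * q := by
  obtain ⟨m, hm⟩ := exists_dvd_pow_three_sub hq (by omega) (ℓ * p)
  exact stmt_16_general ℓ p q hℓ hp hq h9 hm K β hβ hrank
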